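/- arXiv:2006.13034 — 2 statements merged into one kernel-verified Lean document; each statement's English description precedes it below -/
import Mathlib

section
/- The sequence 0 → M →(Q) S ⊗_R M →(Ψ) S ⊗_R M →(ev) M → 0 is an exact sequence of S-modules. (This is the affine-local form of the spectral exact sequence: the spectral datum M is recovered, up to twist, as the kernel and cokernel of the operator Ψ = x̄ − x acting on the pullback of the pushforward module.) -/
/-!
Setup: `R` a commutative ring, `r ≥ 1`, `a₁, …, a_r ∈ R` with `a 0 = 1`,
`P(X) = ∑_{j=0}^{r} a_j X^{r-j} = X^r + a₁ X^{r-1} + ⋯ + a_r`,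
`S = R[X]/(P)` with `x` the class of `X`, and `M` an `S`-module.
`S ⊗[R] M` is an `S`-module via the left tensor factor.
-/

open Polynomial TensorProduct

noncomputable section

variable (R : Type*) [CommRing R] (r : ℕ) (a : ℕ → R)

/-- The polynomial `P(X) = ∑_{j=0}^{r} a_j X^{r-j}`; when `a 0 = 1` this is
`X^r + a₁ X^{r-1} + ⋯ + a_{r-1} X + a_r`. -/
def specPoly : Polynomial R := ∑ j ∈ Finset.range (r + 1), Polynomial.C (a j) * Polynomial.X ^ (r - j)

/-- `S = R[X]/(P)`. -/
abbrev SpecS := AdjoinRoot (specPoly R r a)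

/-- `x ∈ S`, the class of `X`. -/
def specX : SpecS R r a := AdjoinRoot.root _

variable (M : Type*) [AddCommGroup M] [Module R M] [Module (SpecS R r a) M]
  [IsScalarTower R (SpecS R r a) M]

/-- `ev : S ⊗_R M → M`, `p ⊗ m ↦ p • m`. -/
def specEv : SpecS R r a ⊗[R] M →ₗ[SpecS R r a] M :=
  LinearMap.liftBaseChange _ LinearMap.id

/-- `Ψ : S ⊗_R M → S ⊗_R M`, `q ⊗ m ↦ q ⊗ (x • m) − (x * q) ⊗ m`. -/
def specPsi : SpecS R r a ⊗[R] M →ₗ[SpecS R r a] SpecS R r a ⊗[R] M :=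
  LinearMap.baseChange (SpecS R r a)
      ((LinearMap.lsmul (SpecS R r a) M (specX R r a)).restrictScalars R)
    - LinearMap.lsmul (SpecS R r a) (SpecS R r a ⊗[R] M) (specX R r a)

/-- `Q : M → S ⊗_R M`,
`Q(m) = ∑_{i=0}^{r−1} x^i ⊗ ( ∑_{j=0}^{r−1−i} a_j x^{r−1−i−j} ) • m`. -/
def specQ (m : M) : SpecS R r a ⊗[R] M :=
  ∑ i ∈ Finset.range r,
    ((specX R r a) ^ i) ⊗ₜ[R]
      ((∑ j ∈ Finset.range (r - i),
          algebraMap R (SpecS R r a) (a j) * (specX R r a) ^ (r - 1 - i - j)) • m)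

/-!
Write `L s` and `B s` for multiplication by `s` on the left and on the right factor of `S ⊗ M`,
so that `Ψ = B x - L x`. The map `Q` is `m ↦ D (1 ⊗ m)`, where `D` is the divided difference of `P`
at the commuting operators `L x` and `B x`; hence `Ψ D = P(B x) - P(L x) = 0`.

As `x` generates `S`, the operators `L s` and `B s` agree on `ker Ψ` for every `s ∈ S`. So if a
functional `φ` on `S`, applied to the left factor, kills `z ∈ ker Ψ`, then so does every
`φ (s * ·)`. The functional `τ` reading off the coefficient of `x ^ (r - 1)` generates the dual of
`S` in this way, so `τ` is injective on `ker Ψ`; since it is also a left inverse of `Q`, it follows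
that `ker Ψ = im Q`. Dually, `L s` and `B s` agree modulo `im Ψ`, which gives `z ≡ 1 ⊗ ev z`.
-/

section DividedDifference

variable {A E : Type*} [CommRing A] [Ring E] [Algebra A E]

/-- The divided difference `(p(v) - p(u)) / (v - u)` of a polynomial `p` at two elements of an
algebra, encoded without division through `X ^ n ↦ ∑ i < n, u ^ i * v ^ (n - 1 - i)`. It is meant
for commuting `u` and `v`. -/
def dividedDifference (u v : E) : A[X] →ₗ[A] E :=
  Polynomial.lsum fun n =>
    LinearMap.toSpanSingleton A E (∑ i ∈ Finset.range n, u ^ i * v ^ (n - 1 - i))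

lemma dividedDifference_C_mul_X_pow (u v : E) (c : A) (n : ℕ) :
    dividedDifference u v (C c * X ^ n) =
      c • ∑ i ∈ Finset.range n, u ^ i * v ^ (n - 1 - i) := by
  simp [dividedDifference, C_mul_X_pow_eq_monomial]

lemma sub_mul_dividedDifference {u v : E} (huv : Commute u v) (p : A[X]) :
    (v - u) * dividedDifference u v p = aeval v p - aeval u p := by
  induction p using Polynomial.induction_on' with
  | add p q hp hq => rw [map_add, mul_add, hp, hq, map_add, map_add, add_sub_add_comm]
  | monomial n c =>
    rw [← C_mul_X_pow_eq_monomial, dividedDifference_C_mul_X_pow, mul_smul_comm,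
      huv.mul_neg_geom_sum₂, smul_sub]
    simp only [map_mul, aeval_C, map_pow, aeval_X, Algebra.smul_def]

lemma commute_dividedDifference {u v w : E} (hu : Commute w u) (hv : Commute w v) (p : A[X]) :
    Commute w (dividedDifference u v p) := by
  induction p using Polynomial.induction_on' with
  | add p q hp hq => rw [map_add]; exact hp.add_right hq
  | monomial n c =>
    rw [← C_mul_X_pow_eq_monomial, dividedDifference_C_mul_X_pow]
    exact (Commute.sum_right _ _ _ fun i _ =>
      (hu.pow_right _).mul_right (hv.pow_right _)).smul_right c

end DividedDifference

section Contraction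

variable {A S N : Type*} [CommSemiring A] [AddCommMonoid S] [Module A S] [AddCommMonoid N]
  [Module A N]

/-- A linear functional on `S` applied to the left factor of `S ⊗ N`. For a suitable functional it
is a left inverse of `Q`. -/
def dualContract : Module.Dual A S →ₗ[A] S ⊗[A] N →ₗ[A] N :=
  (TensorProduct.lid A N).toLinearMap.compRight A ∘ₗ LinearMap.rTensorHom N

lemma dualContract_apply (φ : Module.Dual A S) (z : S ⊗[A] N) :
    dualContract φ z = TensorProduct.lid A N (φ.rTensor N z) :=
  rfl

lemma dualContract_tmul (φ : Module.Dual A S) (s : S) (m : N) :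
    dualContract φ (s ⊗ₜ[A] m) = φ s • m := by
  simp [dualContract_apply]

lemma eq_zero_of_dualContract_eq_zero [Module.Free A S] {z : S ⊗[A] N}
    (hz : ∀ φ : Module.Dual A S, dualContract φ z = 0) : z = 0 := by
  classical
  let b := Module.Free.chooseBasis A S
  refine (TensorProduct.equivFinsuppOfBasisLeft b).map_eq_zero_iff.mp (Finsupp.ext fun i => ?_)
  rw [TensorProduct.equivFinsuppOfBasisLeft_apply]
  exact hz (b.coord i)

end Contraction

section TensorOperators

variable {A S N : Type*} [CommRing A] [CommRing S] [Algebra A S] [AddCommGroup N] [Module A N]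

variable (A S N) in
/-- Multiplication by elements of `S` on the left factor of `S ⊗ N`. -/
def leftMul : S →ₐ[A] Module.End S (S ⊗[A] N) :=
  Algebra.lsmul A S (S ⊗[A] N)

lemma leftMul_apply (s : S) (z : S ⊗[A] N) : leftMul A S N s z = s • z :=
  rfl

lemma commute_leftMul (s : S) (T : Module.End S (S ⊗[A] N)) : Commute (leftMul A S N s) T :=
  LinearMap.ext fun z => (T.map_smul s z).symm

lemma dualContract_smul (φ : Module.Dual A S) (s : S) (z : S ⊗[A] N) :
    dualContract φ (s • z) = dualContract (φ ∘ₗ LinearMap.mulLeft A s) z := by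
  induction z with
  | zero => simp
  | add z w hz hw => simp only [smul_add, map_add, hz, hw]
  | tmul q m => simp only [TensorProduct.smul_tmul', dualContract_tmul, smul_eq_mul,
      LinearMap.comp_apply, LinearMap.mulLeft_apply]

variable [Module S N] [IsScalarTower A S N]

variable (A S N) in
/-- Multiplication by elements of `S` on the right factor of `S ⊗ N`. -/
def rightMul : S →ₐ[A] Module.End S (S ⊗[A] N) :=
  (Module.End.baseChangeHom A S N).comp (Algebra.lsmul A A N)

lemma rightMul_tmul (s q : S) (m : N) : rightMul A S N s (q ⊗ₜ[A] m) = q ⊗ₜ[A] (s • m) :=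
  rfl

lemma dualContract_rightMul (φ : Module.Dual A S) (s : S) (z : S ⊗[A] N) :
    dualContract φ (rightMul A S N s z) = s • dualContract φ z := by
  induction z with
  | zero => simp
  | add z w hz hw => simp only [map_add, hz, hw, smul_add]
  | tmul q m => rw [rightMul_tmul, dualContract_tmul, dualContract_tmul, smul_comm]

/-- The operator `q ⊗ m ↦ q ⊗ s m - s q ⊗ m` on `S ⊗ N`, which for `s = x` is the map `Ψ`. -/
def tensorCommutator (s : S) : Module.End S (S ⊗[A] N) :=
  rightMul A S N s - leftMul A S N s

lemma tensorCommutator_tmul (s q : S) (m : N) :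
    tensorCommutator s (q ⊗ₜ[A] m) = q ⊗ₜ[A] (s • m) - (s * q) ⊗ₜ[A] m :=
  rfl

lemma rightMul_eq_smul_of_tensorCommutator_eq_zero {x : S} {z : S ⊗[A] N}
    (hz : tensorCommutator x z = 0) {s : S} (hs : s ∈ Algebra.adjoin A {x}) :
    rightMul A S N s z = s • z := by
  induction hs using Algebra.adjoin_induction with
  | mem s hs => rw [Set.mem_singleton_iff.mp hs]; exact sub_eq_zero.mp hz
  | algebraMap c =>
    rw [AlgHom.commutes, Module.algebraMap_end_apply, algebraMap_smul]
  | add s t _ _ hs ht => rw [map_add, LinearMap.add_apply, hs, ht, add_smul]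
  | mul s t _ _ hs ht =>
    rw [map_mul, Module.End.mul_apply, ht, map_smul, hs, smul_smul, mul_comm t]

lemma rightMul_mem_range_tensorCommutator {x : S} (s : S) {z : S ⊗[A] N}
    (hz : z ∈ LinearMap.range (tensorCommutator (A := A) (N := N) x)) :
    rightMul A S N s z ∈ LinearMap.range (tensorCommutator (A := A) (N := N) x) := by
  obtain ⟨w, rfl⟩ := hz
  have hcomm : Commute (rightMul A S N s) (rightMul A S N x - leftMul A S N x) :=
    Commute.sub_right (R := Module.End S (S ⊗[A] N)) ((Commute.all s x).map (rightMul A S N))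
      (commute_leftMul x (rightMul A S N s)).symm
  exact ⟨rightMul A S N s w, (LinearMap.congr_fun hcomm.eq w).symm⟩

lemma tensorCommutator_mem_range {x s : S} (hs : s ∈ Algebra.adjoin A {x}) (z : S ⊗[A] N) :
    tensorCommutator s z ∈ LinearMap.range (tensorCommutator (A := A) (N := N) x) := by
  induction hs using Algebra.adjoin_induction with
  | mem s hs => exact ⟨z, by rw [Set.mem_singleton_iff.mp hs]⟩
  | algebraMap c => simp [tensorCommutator]
  | add s t _ _ hs ht =>
    have hadd : tensorCommutator (s + t) z = tensorCommutator s z + tensorCommutator t z := by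
      simp only [tensorCommutator, map_add, LinearMap.sub_apply, LinearMap.add_apply]
      abel
    exact hadd ▸ add_mem hs ht
  | mul s t _ _ hs ht =>
    have hmul : tensorCommutator (s * t) z =
        rightMul A S N s (tensorCommutator t z) + t • tensorCommutator s z := by
      simp only [tensorCommutator, map_mul, LinearMap.sub_apply, Module.End.mul_apply,
        leftMul_apply, map_sub, map_smul, smul_sub, smul_comm t s]
      abel
    exact hmul ▸ add_mem (rightMul_mem_range_tensorCommutator s ht) (Submodule.smul_mem _ t hs)

lemma exact_tensorCommutator_liftBaseChange {x : S} (hx : Algebra.adjoin A {x} = ⊤) :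
    Function.Exact (tensorCommutator (A := A) (N := N) x)
      (LinearMap.liftBaseChange S (LinearMap.id : N →ₗ[A] N)) := by
  set ev := LinearMap.liftBaseChange S (LinearMap.id : N →ₗ[A] N)
  have ev_tensorCommutator : ev ∘ₗ tensorCommutator x = 0 := by
    ext m
    simp [ev, tensorCommutator_tmul]
  have sub_ev_mem_range (z : S ⊗[A] N) :
      z - 1 ⊗ₜ[A] ev z ∈ LinearMap.range (tensorCommutator (A := A) (N := N) x) := by
    induction z with
    | zero => simp
    | add z w hz hw =>
      rw [map_add, TensorProduct.tmul_add, add_sub_add_comm]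
      exact add_mem hz hw
    | tmul q m =>
      have hq := tensorCommutator_mem_range (hx ▸ Algebra.mem_top : q ∈ Algebra.adjoin A {x})
        ((1 : S) ⊗ₜ[A] m)
      simpa [ev, tensorCommutator_tmul] using neg_mem hq
  intro z
  refine ⟨fun hz => ?_, ?_⟩
  · simpa [hz] using sub_ev_mem_range z
  · rintro ⟨w, rfl⟩
    exact LinearMap.congr_fun ev_tensorCommutator w

/-- The map `Q` of a polynomial `f` and an element `x ∈ S`: the divided difference of `f` at the two
multiplications by `x`, applied to `1 ⊗ m`. -/
def dividedDifferenceMap (x : S) (f : A[X]) : N →ₗ[A] S ⊗[A] N :=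
  (dividedDifference (leftMul A S N x) (rightMul A S N x) f).restrictScalars A ∘ₗ
    TensorProduct.mk A S N 1

lemma dividedDifferenceMap_apply (x : S) (f : A[X]) (m : N) :
    dividedDifferenceMap x f m =
      dividedDifference (leftMul A S N x) (rightMul A S N x) f (1 ⊗ₜ[A] m) :=
  rfl

lemma dividedDifferenceMap_add (x : S) (f g : A[X]) (m : N) :
    dividedDifferenceMap x (f + g) m =
      dividedDifferenceMap x f m + dividedDifferenceMap x g m := by
  simp only [dividedDifferenceMap_apply, map_add, LinearMap.add_apply]

lemma dividedDifferenceMap_sum {ι : Type*} (x : S) (t : Finset ι) (f : ι → A[X]) (m : N) :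
    dividedDifferenceMap x (∑ i ∈ t, f i) m = ∑ i ∈ t, dividedDifferenceMap x (f i) m := by
  simp only [dividedDifferenceMap_apply, map_sum, LinearMap.sum_apply]

lemma dividedDifferenceMap_C_mul_X_pow (x : S) (c : A) (n : ℕ) (m : N) :
    dividedDifferenceMap x (C c * X ^ n) m =
      c • ∑ i ∈ Finset.range n, (x ^ i) ⊗ₜ[A] (x ^ (n - 1 - i) • m) := by
  simp only [dividedDifferenceMap_apply, dividedDifference_C_mul_X_pow, LinearMap.smul_apply,
    LinearMap.sum_apply, ← map_pow, Module.End.mul_apply, rightMul_tmul, leftMul_apply,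
    TensorProduct.smul_tmul', smul_eq_mul, mul_one]

lemma tensorCommutator_dividedDifferenceMap (x : S) (f : A[X]) (m : N) :
    tensorCommutator x (dividedDifferenceMap x f m) =
      1 ⊗ₜ[A] (aeval x f • m) - aeval x f ⊗ₜ[A] m := by
  have hmul := sub_mul_dividedDifference (E := Module.End S (S ⊗[A] N))
    (commute_leftMul x (rightMul A S N x)) f
  rw [aeval_algHom_apply, aeval_algHom_apply] at hmul
  refine (LinearMap.congr_fun hmul (1 ⊗ₜ[A] m)).trans ?_
  rw [LinearMap.sub_apply, rightMul_tmul, leftMul_apply, TensorProduct.smul_tmul', smul_eq_mul,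
    mul_one]

lemma tensorCommutator_dividedDifferenceMap_eq_zero {x : S} {f : A[X]} (hf : aeval x f = 0)
    (m : N) : tensorCommutator x (dividedDifferenceMap x f m) = 0 := by
  rw [tensorCommutator_dividedDifferenceMap, hf, zero_smul, TensorProduct.tmul_zero,
    TensorProduct.zero_tmul, sub_zero]

lemma dividedDifferenceMap_smul {x s : S} {f : A[X]} (hf : aeval x f = 0)
    (hs : s ∈ Algebra.adjoin A {x}) (m : N) :
    dividedDifferenceMap x f (s • m) = s • dividedDifferenceMap x f m := by
  have hcomm : Commute (rightMul A S N s)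
      (dividedDifference (leftMul A S N x) (rightMul A S N x) f) :=
    commute_dividedDifference (commute_leftMul x (rightMul A S N s)).symm
      ((Commute.all s x).map (rightMul A S N)) f
  calc
    dividedDifferenceMap x f (s • m) = rightMul A S N s (dividedDifferenceMap x f m) :=
      (LinearMap.congr_fun hcomm.eq (1 ⊗ₜ[A] m)).symm
    _ = s • dividedDifferenceMap x f m :=
      rightMul_eq_smul_of_tensorCommutator_eq_zero
        (tensorCommutator_dividedDifferenceMap_eq_zero hf m) hs

end TensorOperators

section AdjoinRoot

variable {A S : Type*} [CommRing A] [CommRing S] [Algebra A S] {f : A[X]}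

/-- The linear functional on `S = A[x]/(f)` reading off the coefficient of `x ^ k`. -/
def coeffForm (h : IsAdjoinRootMonic S f) (k : ℕ) : Module.Dual A S :=
  LinearMap.proj k ∘ₗ h.coeff

lemma coeffForm_root_pow (h : IsAdjoinRootMonic S f) (k : ℕ) {i : ℕ} (hi : i < f.natDegree) :
    coeffForm h k (h.root ^ i) = if k = i then 1 else 0 := by
  simp [coeffForm, h.coeff_root_pow hi, Pi.single_apply]

lemma coeffForm_succ_comp_mulLeft_root (h : IsAdjoinRootMonic S f) {k : ℕ}
    (hk : k + 1 < f.natDegree) :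
    coeffForm h (k + 1) ∘ₗ LinearMap.mulLeft A h.root = coeffForm h k +
      coeffForm h (k + 1) (h.root ^ f.natDegree) • coeffForm h (f.natDegree - 1) := by
  refine h.basis.ext fun ⟨i, hi⟩ => ?_
  simp only [h.basis_apply, LinearMap.comp_apply, LinearMap.mulLeft_apply, ← pow_succ',
    LinearMap.add_apply, LinearMap.smul_apply, coeffForm_root_pow h _ hi, smul_eq_mul]
  rcases Nat.lt_or_ge (i + 1) f.natDegree with hi' | hi'
  · rw [coeffForm_root_pow h _ hi', if_neg (show f.natDegree - 1 ≠ i by omega)]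
    simp
  · obtain rfl : i = f.natDegree - 1 := by omega
    rw [Nat.sub_add_cancel (by omega), if_neg (show k ≠ f.natDegree - 1 by omega)]
    simp

-- `coeffForm h (f.natDegree - 1)` generates the dual of `S` as an `S`-module.
lemma eq_top_of_coeffForm_mem (h : IsAdjoinRootMonic S f) {W : Submodule A (Module.Dual A S)}
    (hW : ∀ φ ∈ W, φ ∘ₗ LinearMap.mulLeft A h.root ∈ W)
    (htop : coeffForm h (f.natDegree - 1) ∈ W) : W = ⊤ := by
  have coeffForm_mem (d k : ℕ) (hk : k + d + 1 = f.natDegree) : coeffForm h k ∈ W := by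
    induction d generalizing k with
    | zero => rwa [← hk] at htop
    | succ d ih =>
      have hsucc := hW _ (ih (k + 1) (by omega))
      rw [coeffForm_succ_comp_mulLeft_root h (by omega)] at hsucc
      exact (W.add_mem_iff_left (W.smul_mem _ htop)).mp hsucc
  refine Submodule.eq_top_iff'.mpr fun φ => ?_
  rw [← h.basis.sum_dual_apply_smul_coord φ]
  refine sum_mem fun i _ => W.smul_mem _ ?_
  have hcoord : h.basis.coord i = coeffForm h i :=
    LinearMap.ext fun s => (h.coeff_apply_coe s i).symm
  exact hcoord ▸ coeffForm_mem (f.natDegree - 1 - i) i (by omega)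

variable {N : Type*} [AddCommGroup N] [Module A N] [Module S N] [IsScalarTower A S N]

lemma eq_zero_of_tensorCommutator_root_eq_zero (h : IsAdjoinRootMonic S f) {z : S ⊗[A] N}
    (hz : tensorCommutator h.root z = 0)
    (htop : dualContract (coeffForm h (f.natDegree - 1)) z = 0) : z = 0 := by
  have : Module.Free A S := .of_basis h.basis
  let W : Submodule A (Module.Dual A S) := LinearMap.ker (dualContract.flip z)
  have hW (φ : Module.Dual A S) (hφ : φ ∈ W) : φ ∘ₗ LinearMap.mulLeft A h.root ∈ W := by
    change dualContract φ z = 0 at hφ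
    change dualContract (φ ∘ₗ LinearMap.mulLeft A h.root) z = 0
    rw [← dualContract_smul, ← rightMul_eq_smul_of_tensorCommutator_eq_zero hz
      (Algebra.self_mem_adjoin_singleton A h.root), dualContract_rightMul, hφ, smul_zero]
  have hW_top : W = ⊤ := eq_top_of_coeffForm_mem h hW htop
  exact eq_zero_of_dualContract_eq_zero fun φ => (hW_top ▸ Submodule.mem_top : φ ∈ W)

lemma dualContract_dividedDifferenceMap_C_mul_X_pow (h : IsAdjoinRootMonic S f) {k : ℕ}
    (hk : k ≤ f.natDegree) (c : A) (m : N) :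
    dualContract (coeffForm h (f.natDegree - 1)) (dividedDifferenceMap h.root (C c * X ^ k) m) =
      if f.natDegree - 1 < k then c • m else 0 := by
  have hterm (i : ℕ) (hi : i ∈ Finset.range k) :
      dualContract (coeffForm h (f.natDegree - 1))
        ((h.root ^ i) ⊗ₜ[A] (h.root ^ (k - 1 - i) • m)) =
      if f.natDegree - 1 = i then h.root ^ (k - 1 - i) • m else 0 := by
    rw [dualContract_tmul, coeffForm_root_pow h _ ((Finset.mem_range.mp hi).trans_le hk), ite_smul,
      one_smul, zero_smul]
  rw [dividedDifferenceMap_C_mul_X_pow, map_smul, map_sum, Finset.sum_congr rfl hterm,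
    Finset.sum_ite_eq, smul_ite, smul_zero, show k - 1 - (f.natDegree - 1) = 0 by omega, pow_zero,
    one_smul]
  simp only [Finset.mem_range]

lemma dualContract_dividedDifferenceMap (h : IsAdjoinRootMonic S f) (m : N) :
    dualContract (coeffForm h (f.natDegree - 1)) (dividedDifferenceMap h.root f m) = m := by
  rcases subsingleton_or_nontrivial S with _ | _
  · have := Module.subsingleton S N
    exact Subsingleton.elim _ _
  have hdeg := h.deg_pos
  have hlower (k : ℕ) (hk : k ∈ Finset.range f.natDegree) :
      dualContract (coeffForm h (f.natDegree - 1))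
        (dividedDifferenceMap h.root (C (f.coeff k) * X ^ k) m) = 0 := by
    have hk := Finset.mem_range.mp hk
    rw [dualContract_dividedDifferenceMap_C_mul_X_pow h hk.le, if_neg (by omega)]
  have hlead := dualContract_dividedDifferenceMap_C_mul_X_pow h le_rfl 1 m
  rw [C_1, one_mul, one_smul, if_pos (by omega)] at hlead
  calc
    _ = dualContract (coeffForm h (f.natDegree - 1)) (dividedDifferenceMap h.root
          (X ^ f.natDegree + ∑ k ∈ Finset.range f.natDegree, C (f.coeff k) * X ^ k) m) :=
      congrArg (fun p => dualContract _ (dividedDifferenceMap h.root p m)) h.monic.as_sum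
    _ = m := by
      rw [dividedDifferenceMap_add, dividedDifferenceMap_sum, map_add, map_sum, hlead,
        Finset.sum_eq_zero hlower, add_zero]

lemma dividedDifferenceMap_root_injective (h : IsAdjoinRootMonic S f) :
    Function.Injective (dividedDifferenceMap (N := N) h.root f) :=
  Function.LeftInverse.injective (dualContract_dividedDifferenceMap h)

lemma exact_dividedDifferenceMap_tensorCommutator (h : IsAdjoinRootMonic S f) :
    Function.Exact (dividedDifferenceMap (N := N) h.root f) (tensorCommutator h.root) := by
  intro z
  refine ⟨fun hz => ?_, ?_⟩
  · set m := dualContract (coeffForm h (f.natDegree - 1)) z with hm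
    refine ⟨m, (sub_eq_zero.mp (eq_zero_of_tensorCommutator_root_eq_zero h ?_ ?_)).symm⟩
    · rw [map_sub, hz, tensorCommutator_dividedDifferenceMap_eq_zero h.aeval_root_self, sub_zero]
    · rw [map_sub, dualContract_dividedDifferenceMap, ← hm, sub_self]
  · rintro ⟨m, rfl⟩
    exact tensorCommutator_dividedDifferenceMap_eq_zero h.aeval_root_self m

end AdjoinRoot

section Spectral

variable {R r a}

lemma specPoly_monic (ha : a 0 = 1) : (specPoly R r a).Monic := by
  refine monic_of_natDegree_le_of_coeff_eq_one r ?_ ?_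
  · exact natDegree_sum_le_of_forall_le _ _ fun j _ =>
      (natDegree_C_mul_X_pow_le _ _).trans (Nat.sub_le r j)
  · have hcoeff (j : ℕ) (hj : j ∈ Finset.range r) :
        (C (a (j + 1)) * X ^ (r - (j + 1))).coeff r = 0 := by
      have := Finset.mem_range.mp hj
      exact coeff_C_mul_X_pow _ _ _ |>.trans (if_neg (by omega))
    rw [specPoly, Finset.sum_range_succ', coeff_add, finsetSum_coeff, Finset.sum_eq_zero hcoeff]
    simp [ha]

lemma dividedDifferenceMap_specPoly {S N : Type*} [CommRing S] [Algebra R S] [AddCommGroup N]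
    [Module R N] [Module S N] [IsScalarTower R S N] (x : S) (m : N) :
    dividedDifferenceMap x (specPoly R r a) m = ∑ i ∈ Finset.range r, (x ^ i) ⊗ₜ[R]
      ((∑ j ∈ Finset.range (r - i), algebraMap R S (a j) * x ^ (r - 1 - i - j)) • m) := by
  simp only [specPoly, dividedDifferenceMap_sum, dividedDifferenceMap_C_mul_X_pow,
    Finset.sum_smul, TensorProduct.tmul_sum, Finset.smul_sum]
  rw [Finset.sum_comm' (t' := Finset.range r) (s' := fun i => Finset.range (r - i))
    fun j i => by simp only [Finset.mem_range]; omega]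
  refine Finset.sum_congr rfl fun i _ => Finset.sum_congr rfl fun j _ => ?_
  rw [mul_smul, algebraMap_smul, TensorProduct.tmul_smul (a j),
    show r - j - 1 - i = r - 1 - i - j by omega]

end Spectral

/-- The sequence `0 → M →(Q) S ⊗_R M →(Ψ) S ⊗_R M →(ev) M → 0` is an exact sequence of
`S`-modules: `Q` is `S`-linear and injective, `ker Ψ = im Q`, `ker ev = im Ψ`, and `ev` is
surjective. -/
theorem statement_0 (hr : 1 ≤ r) (ha : a 0 = 1) :
    IsLinearMap (SpecS R r a) (specQ R r a M) ∧
    Function.Injective (specQ R r a M) ∧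
    Function.Exact (specQ R r a M) (specPsi R r a M) ∧
    Function.Exact (specPsi R r a M) (specEv R r a M) ∧
    Function.Surjective (specEv R r a M) := by
  let h := AdjoinRoot.isAdjoinRootMonic (specPoly R r a) (specPoly_monic ha)
  have hgen : Algebra.adjoin R {specX R r a} = ⊤ := h.adjoin_root_eq_top
  have hroot : aeval (specX R r a) (specPoly R r a) = 0 := h.aeval_root_self
  have hQ : specQ R r a M = dividedDifferenceMap (specX R r a) (specPoly R r a) :=
    funext fun m => (dividedDifferenceMap_specPoly (specX R r a) m).symm
  rw [hQ]
  exact ⟨⟨map_add _, fun _ => dividedDifferenceMap_smul hroot (hgen ▸ Algebra.mem_top)⟩,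
    dividedDifferenceMap_root_injective h,
    exact_dividedDifferenceMap_tensorCommutator h,
    exact_tensorCommutator_liftBaseChange hgen,
    fun m => ⟨1 ⊗ₜ[R] m, by simp [specEv]⟩⟩
end
end

section
/- The composite Ψ ∘ Q : M → S ⊗_R M is zero; that is, for every m ∈ M one has Ψ(Q(m)) = 0, so the image of Q is contained in the kernel of Ψ. -/
/-!
Setup: `R` a commutative ring, `r ≥ 1`, `a₁, …, a_r ∈ R` with `a 0 = 1`,
`P(X) = ∑_{j=0}^{r} a_j X^{r-j} = X^r + a₁ X^{r-1} + ⋯ + a_r`,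
`S = R[X]/(P)` with `x` the class of `X`, and `M` an `S`-module.
`S ⊗[R] M` is an `S`-module via the left tensor factor.
-/

open Polynomial TensorProduct

noncomputable section

variable (R : Type*) [CommRing R] (r : ℕ) (a : ℕ → R)

variable (M : Type*) [AddCommGroup M] [Module R M] [Module (SpecS R r a) M]
  [IsScalarTower R (SpecS R r a) M]

/-!
Write `x` and `f` for multiplication by `x` on the left and on the right factor of `S ⊗[R] M`.
These operators commute, and `Ψ = f - x`. Swapping the two sums in `Q(m)`
produces geometric sums, which identify `Q(m)` with the divided difference
`(P(f) - P(x)) / (f - x)` evaluated at `1 ⊗ m`. Hence `Ψ(Q(m)) = (P(f) - P(x)) (1 ⊗ m)`, and both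
`P(f)` and `P(x)` vanish.
-/

/-- The polynomial part of `specPoly R r a` divided by `X ^ (i + 1)`, that is, the `i`-th
intermediate quotient of Horner's scheme. These are the coefficients of the divided difference
`(P(Y) - P(X)) / (Y - X) = ∑ i < r, X ^ i * specHorner R r a i (Y)`. -/
def specHorner (i : ℕ) : R[X] :=
  ∑ j ∈ Finset.range (r - i), C (a j) * X ^ (r - 1 - i - j)

section Semiring

variable {E : Type*} [Semiring E] [Algebra R E]

theorem aeval_specPoly (x : E) :
    aeval x (specPoly R r a) = ∑ j ∈ Finset.range (r + 1), a j • x ^ (r - j) := by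
  simp only [specPoly, map_sum, map_mul, map_pow, aeval_C, aeval_X, Algebra.smul_def]

theorem aeval_specHorner (x : E) (i : ℕ) :
    aeval x (specHorner R r a i) = ∑ j ∈ Finset.range (r - i), a j • x ^ (r - 1 - i - j) := by
  simp only [specHorner, map_sum, map_mul, map_pow, aeval_C, aeval_X, Algebra.smul_def]

theorem sum_pow_mul_aeval_specHorner (x y : E) :
    ∑ i ∈ Finset.range r, x ^ i * aeval y (specHorner R r a i) =
      ∑ j ∈ Finset.range (r + 1),
        a j • ∑ i ∈ Finset.range (r - j), x ^ i * y ^ (r - j - 1 - i) := by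
  simp only [aeval_specHorner, Finset.mul_sum, Finset.smul_sum, mul_smul_comm]
  rw [Finset.sum_comm' (t' := Finset.range (r + 1)) (s' := fun j => Finset.range (r - j))
    (by simp only [Finset.mem_range]; omega)]
  refine Finset.sum_congr rfl fun j _ => Finset.sum_congr rfl fun i _ => ?_
  rw [show r - 1 - i - j = r - j - 1 - i by omega]

end Semiring

theorem sub_mul_sum_pow_mul_aeval_specHorner {E : Type*} [Ring E] [Algebra R E] {x y : E}
    (hxy : Commute x y) :
    (y - x) * ∑ i ∈ Finset.range r, x ^ i * aeval y (specHorner R r a i) =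
      aeval y (specPoly R r a) - aeval x (specPoly R r a) := by
  simp only [sum_pow_mul_aeval_specHorner, aeval_specPoly, Finset.mul_sum, mul_smul_comm,
    ← Finset.sum_sub_distrib, ← smul_sub]
  simp only [← Finset.mul_sum, hxy.mul_neg_geom_sum₂]

section TensorProduct

variable {A N : Type*} [CommRing A] [Algebra R A] [AddCommGroup N] [Module R N]

/-- The divided difference `(P(f) - P(x)) / (f - x)` of `P = specPoly R r a`, as an operator on
`A ⊗[R] N` with `x` acting on the left factor and `f` on the right one, evaluated at `1 ⊗ n`.
It generalizes `specQ`, where both `x` and `f` are given by the class of `X`. -/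
def specDividedDifference (x : A) (f : Module.End R N) (n : N) : A ⊗[R] N :=
  ∑ i ∈ Finset.range r, (x ^ i) ⊗ₜ[R] aeval f (specHorner R r a i) n

theorem baseChange_specDividedDifference_sub_smul (x : A) (f : Module.End R N) (n : N) :
    f.baseChange A (specDividedDifference R r a x f n) - x • specDividedDifference R r a x f n =
      1 ⊗ₜ[R] aeval f (specPoly R r a) n - aeval x (specPoly R r a) ⊗ₜ[R] n := by
  let μ : A →ₐ[R] Module.End A (A ⊗[R] N) := Algebra.lsmul R A (A ⊗[R] N)
  let β : Module.End R N →ₐ[R] Module.End A (A ⊗[R] N) := Module.End.baseChangeHom R A N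
  have hμ (b c : A) (k : N) : μ b (c ⊗ₜ[R] k) = (b * c) ⊗ₜ[R] k := rfl
  have hβ (g : Module.End R N) (c : A) (k : N) : β g (c ⊗ₜ[R] k) = c ⊗ₜ[R] g k := rfl
  have hcomm : Commute (μ x) (β f) := LinearMap.ext fun z => ((β f).map_smul x z).symm
  have hdiff := LinearMap.congr_fun (sub_mul_sum_pow_mul_aeval_specHorner
    (E := Module.End A (A ⊗[R] N)) R r a hcomm) (1 ⊗ₜ[R] n)
  simp only [aeval_algHom_apply, ← map_pow, Module.End.mul_apply, LinearMap.sum_apply,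
    LinearMap.sub_apply, hμ, hβ, mul_one] at hdiff
  exact hdiff

theorem statement_3_general {x : A} {f : Module.End R N} (hx : aeval x (specPoly R r a) = 0)
    (hf : aeval f (specPoly R r a) = 0) (n : N) :
    f.baseChange A (specDividedDifference R r a x f n) =
      x • specDividedDifference R r a x f n := by
  rw [← sub_eq_zero, baseChange_specDividedDifference_sub_smul, hx, hf,
    LinearMap.zero_apply, tmul_zero, zero_tmul, sub_zero]

end TensorProduct

theorem aeval_specX_specPoly : aeval (specX R r a) (specPoly R r a) = 0 := by
  rw [specX, AdjoinRoot.aeval_eq, AdjoinRoot.mk_self]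

theorem aeval_lsmul_specX_specPoly :
    aeval (Algebra.lsmul R R M (specX R r a)) (specPoly R r a) = 0 := by
  rw [aeval_algHom_apply, aeval_specX_specPoly, map_zero]

theorem specQ_eq_specDividedDifference (m : M) :
    specQ R r a M m =
      specDividedDifference R r a (specX R r a) (Algebra.lsmul R R M (specX R r a)) m := by
  simp only [specQ, specDividedDifference, aeval_algHom_apply, Algebra.lsmul_coe,
    aeval_specHorner _ _ _ (specX R r a), Algebra.smul_def]

/-- The composite `Ψ ∘ Q : M → S ⊗_R M` is zero; in particular the image of `Q` is contained
in the kernel of `Ψ`. -/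
theorem statement_3 (hr : 1 ≤ r) (ha : a 0 = 1) :
    (∀ m : M, specPsi R r a M (specQ R r a M m) = 0) ∧
    Set.range (specQ R r a M) ⊆ {z | specPsi R r a M z = 0} := by
  have h (m : M) : specPsi R r a M (specQ R r a M m) = 0 :=
    specQ_eq_specDividedDifference R r a M m ▸ sub_eq_zero.mpr (statement_3_general R r a
      (aeval_specX_specPoly R r a) (aeval_lsmul_specX_specPoly R r a M) m)
  exact ⟨h, Set.range_subset_iff.mpr h⟩
end
end
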